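/- Let f : ℝ → ℝ be a terrain, G_L ⊆ ℝ a finite set of left guards with nonnegative weights w : G_L → ℝ, N ⊆ ℝ a finite set of points, and x : G_L → ℝ a nonnegative function. Let N_L = { p ∈ N : Σ_{g ∈ G_L, g < p, g sees p} x(g) ≥ 1/2 }. Then there exists A_L ⊆ G_L such that every p ∈ N_L is seen from the left by some guard in A_L and Σ_{g ∈ A_L} w(g) ≤ 2·Σ_{g ∈ G_L} w(g)·x(g). -/

import Mathlib

/-!
For `a < b < c < d`, if `a` sees `c` and `b` sees `d`, then `a` sees `d` (`Sees.order_claim`).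
Hence, for the leftmost point `p` still to be covered, the guards seeing `p` from the left cover
nested sets of the remaining points, and the leftmost of these guards covers the most.

This makes the covering linear program integral (`exists_cover_le`), by induction on the points,
taken from left to right. Let `m` be the least weight of a guard seeing `p`, and lower the weight
of all guards seeing `p` by `m`. As `p` is fractionally covered at least once, the fractional cost
drops by at least `m`. By induction there is a cover of the other points that is no more expensive
than the fractional solution for the lowered weights. By nestedness the guards in it that see `p`
can be replaced by the leftmost of them; if there is none, a guard of lowered weight zero seeing `p`
is added. Now exactly one chosen guard sees `p`, so restoring the weights costs exactly `m`.

The theorem is this integrality applied to the fractional solution `2 * x`.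
-/

open scoped Classical

/-- `a` sees `b` on the terrain `f`. -/
def Sees (f : ℝ → ℝ) (a b : ℝ) : Prop :=
  ∀ t ∈ Set.Icc (0:ℝ) 1, f ((1 - t) * a + t * b) ≤ (1 - t) * f a + t * f b

/-- A guard `g` sees a point `p` from the left. -/
def SeesLeft (f : ℝ → ℝ) (g p : ℝ) : Prop := g < p ∧ Sees f g p

/-- Visibility stated through the abscissa `z` of a point between `a` and `b`, with denominators
cleared. -/
theorem Sees_iff_of_lt (f : ℝ → ℝ) {a b : ℝ} (hab : a < b) :
    Sees f a b ↔ ∀ z, a ≤ z → z ≤ b → (b - a) * f z ≤ (b - z) * f a + (z - a) * f b := by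
  have hpos : 0 < b - a := sub_pos.2 hab
  constructor
  · intro h z haz hzb
    have h1 := h ((z - a) / (b - a))
      ⟨div_nonneg (by linarith) hpos.le, (div_le_one hpos).2 (by linarith)⟩
    have h2 : (1 - (z - a) / (b - a)) * a + (z - a) / (b - a) * b = z := by
      field_simp
      ring
    rw [h2] at h1
    calc (b - a) * f z
        ≤ (b - a) * ((1 - (z - a) / (b - a)) * f a + (z - a) / (b - a) * f b) :=
          mul_le_mul_of_nonneg_left h1 hpos.le
      _ = (b - z) * f a + (z - a) * f b := by
          field_simp
          ring
  · rintro h t ⟨ht0, ht1⟩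
    have h1 := h ((1 - t) * a + t * b) (by nlinarith) (by nlinarith)
    refine le_of_mul_le_mul_left (h1.trans_eq ?_) hpos
    ring

/-- The order claim for terrains: crossing lines of sight can be uncrossed. -/
theorem Sees.order_claim {f : ℝ → ℝ} {a b c d : ℝ} (hab : a < b) (hbc : b < c) (hcd : c < d)
    (hac : Sees f a c) (hbd : Sees f b d) : Sees f a d := by
  rw [Sees_iff_of_lt f (hab.trans hbc)] at hac
  rw [Sees_iff_of_lt f (hbc.trans hcd)] at hbd
  rw [Sees_iff_of_lt f (hab.trans (hbc.trans hcd))]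
  have hb := hac b hab.le hbc.le
  have hc := hbd c hbc.le hcd.le
  -- `d` lies on or above the line through `a` and `c`
  have hd : (d - a) * f c ≤ (d - c) * f a + (c - a) * f d := by
    refine le_of_mul_le_mul_left ?_ (sub_pos.2 hbc)
    nlinarith [mul_le_mul_of_nonneg_left hb (sub_pos.2 hcd).le,
      mul_le_mul_of_nonneg_left hc (sub_pos.2 (hab.trans hbc)).le]
  -- `a` lies on or above the line through `b` and `d`
  have ha : (d - a) * f b ≤ (d - b) * f a + (b - a) * f d := by
    refine le_of_mul_le_mul_left ?_ (sub_pos.2 hbc)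
    nlinarith [mul_le_mul_of_nonneg_left hb (sub_pos.2 (hbc.trans hcd)).le,
      mul_le_mul_of_nonneg_left hc (sub_pos.2 hab).le]
  intro z haz hzd
  rcases le_total z c with hzc | hcz
  · have hz := hac z haz hzc
    refine le_of_mul_le_mul_left ?_ (sub_pos.2 (hab.trans hbc))
    nlinarith [mul_le_mul_of_nonneg_left hz (sub_pos.2 (hab.trans (hbc.trans hcd))).le,
      mul_le_mul_of_nonneg_left hd (sub_nonneg.2 haz)]
  · have hz := hbd z (hbc.le.trans hcz) hzd
    refine le_of_mul_le_mul_left ?_ (sub_pos.2 (hbc.trans hcd))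
    nlinarith [mul_le_mul_of_nonneg_left hz (sub_pos.2 (hab.trans (hbc.trans hcd))).le,
      mul_le_mul_of_nonneg_left ha (sub_nonneg.2 hzd)]

/-- Integrality of the covering linear program for an incidence relation `R` between guards and
points that avoids the pattern "`a` and `b` cover `c`, `b` covers `d`, `a` does not cover `d`"
for `a < b` and `c < d`. -/
theorem exists_cover_le (R : ℝ → ℝ → Prop)
    (hR : ∀ a b c d, a < b → c < d → R a c → R b c → R b d → R a d)
    (G : Finset ℝ) (x : ℝ → ℝ) (hx : ∀ g ∈ G, 0 ≤ x g) (P : Finset ℝ) :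
    ∀ w : ℝ → ℝ, (∀ g ∈ G, 0 ≤ w g) →
      (∀ p ∈ P, 1 ≤ ∑ g ∈ G with R g p, x g) →
      ∃ A ⊆ G, (∀ p ∈ P, ∃ g ∈ A, R g p) ∧ ∑ g ∈ A, w g ≤ ∑ g ∈ G, w g * x g := by
  induction P using Finset.induction_on_min with
  | empty =>
    intro w hw _
    exact ⟨∅, by simp, by simp, by
      simpa using Finset.sum_nonneg fun g hg => mul_nonneg (hw g hg) (hx g hg)⟩
  | insert p s hmin ih =>
    intro w hw hcov
    have hp := hcov p (Finset.mem_insert_self p s)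
    have hne : (G.filter (R · p)).Nonempty := by
      by_contra hempty
      rw [Finset.not_nonempty_iff_eq_empty] at hempty
      rw [hempty] at hp
      norm_num at hp
    obtain ⟨k, hk, hkmin⟩ := Finset.exists_min_image _ w hne
    rw [Finset.mem_filter] at hk
    -- the weights lowered by `m = w k` on the guards covering `p`
    let w' : ℝ → ℝ := fun g => w g - if R g p then w k else 0
    have hw' : ∀ g ∈ G, 0 ≤ w' g := by
      intro g hg
      by_cases h : R g p
      · simpa [w', h] using hkmin g (Finset.mem_filter.2 ⟨hg, h⟩)
      · simpa [w', h] using hw g hg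
    obtain ⟨B, hBG, hBcov, hBw⟩ := ih w' hw' fun q hq => hcov q (Finset.mem_insert_of_mem hq)
    have hcost : ∑ g ∈ G, w' g * x g = ∑ g ∈ G, w g * x g - w k * ∑ g ∈ G with R g p, x g := by
      rw [Finset.mul_sum, Finset.sum_filter, ← Finset.sum_sub_distrib]
      refine Finset.sum_congr rfl fun g _ => ?_
      by_cases h : R g p <;> simp [w', h, sub_mul]
    have hdrop : w k ≤ w k * ∑ g ∈ G with R g p, x g :=
      le_mul_of_one_le_right (hw k hk.1) hp
    have hsplit : ∑ g ∈ B with R g p, w' g + ∑ g ∈ B with ¬ R g p, w' g = ∑ g ∈ B, w' g :=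
      Finset.sum_filter_add_sum_filter_not B (R · p) _
    -- one guard `h` covering `p` can replace all guards of `B` covering `p`
    obtain ⟨h, hhG, hhp, hhw, hhdom⟩ : ∃ h ∈ G, R h p ∧
        w' h ≤ ∑ g ∈ B with R g p, w' g ∧
        ∀ g ∈ B, R g p → ∀ q ∈ s, R g q → R h q := by
      rcases (B.filter (R · p)).eq_empty_or_nonempty with hempty | hB
      · refine ⟨k, hk.1, hk.2, by simp [hempty, w', hk.2], fun g hg hgp => ?_⟩
        have : g ∈ B.filter (R · p) := Finset.mem_filter.2 ⟨hg, hgp⟩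
        simp [hempty] at this
      · have hmem := Finset.mem_filter.1 (Finset.min'_mem _ hB)
        refine ⟨_, hBG hmem.1, hmem.2, ?_, fun g hg hgp q hq hgq => ?_⟩
        · exact Finset.single_le_sum (f := w')
            (fun g hg => hw' g (hBG (Finset.mem_filter.1 hg).1)) (Finset.min'_mem _ hB)
        · rcases (Finset.min'_le (B.filter (R · p)) g
              (Finset.mem_filter.2 ⟨hg, hgp⟩)).eq_or_lt with heq | hlt
          · rw [heq]
            exact hgq
          · exact hR _ g p q hlt (hmin q hq) hmem.2 hgp hgq
    refine ⟨insert h (B.filter fun g => ¬ R g p), ?_, ?_, ?_⟩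
    · exact Finset.insert_subset hhG ((Finset.filter_subset _ _).trans hBG)
    · intro q hq
      rcases Finset.mem_insert.1 hq with rfl | hq
      · exact ⟨h, Finset.mem_insert_self _ _, hhp⟩
      · obtain ⟨g, hg, hgq⟩ := hBcov q hq
        by_cases hgp : R g p
        · exact ⟨h, Finset.mem_insert_self _ _, hhdom g hg hgp q hq hgq⟩
        · exact ⟨g, Finset.mem_insert_of_mem (Finset.mem_filter.2 ⟨hg, hgp⟩), hgq⟩
    · rw [Finset.sum_insert (by simp [hhp])]
      have hrest : ∑ g ∈ B with ¬ R g p, w g = ∑ g ∈ B with ¬ R g p, w' g :=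
        Finset.sum_congr rfl fun g hg => by simp [w', (Finset.mem_filter.1 hg).2]
      have hhw' : w' h = w h - w k := by simp [w', hhp]
      linarith

/-- Rounding a fractional solution: the points fractionally half-covered from the
left can be guarded by left guards of total weight at most twice the fractional
cost. -/
theorem left_half_covered_rounding (f : ℝ → ℝ) (G_L N : Finset ℝ) (w x : ℝ → ℝ)
    (hw : ∀ g ∈ G_L, 0 ≤ w g) (hx : ∀ g ∈ G_L, 0 ≤ x g) :
    ∃ A_L ⊆ G_L,
      (∀ p ∈ N, (1/2 : ℝ) ≤ (∑ g ∈ G_L, if SeesLeft f g p then x g else 0) →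
        ∃ g ∈ A_L, SeesLeft f g p) ∧
      ∑ g ∈ A_L, w g ≤ 2 * ∑ g ∈ G_L, w g * x g := by
  obtain ⟨A, hAG, hAcov, hAw⟩ := exists_cover_le (SeesLeft f)
    (fun a b c d hab hcd hac hbc hbd =>
      ⟨hac.1.trans hcd, Sees.order_claim hab hbc.1 hcd hac.2 hbd.2⟩)
    G_L (fun g => 2 * x g) (fun g hg => mul_nonneg zero_le_two (hx g hg))
    (N.filter fun p => (1/2 : ℝ) ≤ ∑ g ∈ G_L, if SeesLeft f g p then x g else 0) w hw
    (fun p hp => by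
      have h := (Finset.mem_filter.1 hp).2
      rw [← Finset.sum_filter] at h
      rw [← Finset.mul_sum]
      linarith)
  refine ⟨A, hAG, fun p hp h => hAcov p (Finset.mem_filter.2 ⟨hp, h⟩), hAw.trans_eq ?_⟩
  rw [Finset.mul_sum]
  exact Finset.sum_congr rfl fun g _ => by ring
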